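/- Let 0 ≤ ε < 1 and 0 < b < √ε. Then the polynomial P(λ) = λ⁴ + (1−ε)λ³ + (2 + b² − ε)λ² + (1−ε)λ + 1 has a complex root z with Re z > 0; in fact it has a root with Re z = (ε − 1 + √((1+ε)² − 4b²))/4 > 0. -/

import Mathlib

/-!
The polynomial is palindromic, so `λ⁻² P(λ)` is a quadratic in `w = λ + λ⁻¹`, namely
`w² + (1 - ε) w + (b² - ε)`, with discriminant `(1 + ε)² - 4 b²`. Its larger root lies in `(0, 2]`,
and a real number `w` with `|w| ≤ 2` is `λ + λ⁻¹` for some `λ` on the unit circle, whose real part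
is then `w / 2`.
-/

theorem palindromic_quartic_eq_zero {R : Type*} [CommRing R] {a c w z : R}
    (hz : z ^ 2 - w * z + 1 = 0) (hw : w ^ 2 + a * w + (c - 2) = 0) :
    z ^ 4 + a * z ^ 3 + c * z ^ 2 + a * z + 1 = 0 := by
  linear_combination (z ^ 2 + (a + w) * z + 1) * hz + z ^ 2 * hw

theorem sq_sub_two_mul_re_mul_add_normSq_eq_zero (z : ℂ) :
    z ^ 2 - (2 * z.re : ℝ) * z + Complex.normSq z = 0 := by
  rw [← Complex.add_conj, ← Complex.mul_conj]
  ring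

theorem exists_norm_eq_one_and_re_eq {x : ℝ} (hx : |x| ≤ 1) : ∃ z : ℂ, ‖z‖ = 1 ∧ z.re = x := by
  obtain ⟨hx_ge, hx_le⟩ := abs_le.mp hx
  refine ⟨Complex.exp (Real.arccos x * Complex.I), Complex.norm_exp_ofReal_mul_I _, ?_⟩
  rw [Complex.exp_ofReal_mul_I_re, Real.cos_arccos hx_ge hx_le]

theorem exists_palindromic_quartic_root_re_eq_half {a c w : ℝ}
    (hw_abs : |w| ≤ 2) (hw : w ^ 2 + a * w + (c - 2) = 0) :
    ∃ z : ℂ, z ^ 4 + a * z ^ 3 + c * z ^ 2 + a * z + 1 = 0 ∧ z.re = w / 2 := by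
  have hhalf : |w / 2| ≤ 1 := by
    rw [abs_div, abs_two]
    linarith
  obtain ⟨z, hz_norm, hz_re⟩ := exists_norm_eq_one_and_re_eq hhalf
  have hz : z ^ 2 - w * z + 1 = 0 := by
    have h := sq_sub_two_mul_re_mul_add_normSq_eq_zero z
    rwa [Complex.normSq_eq_norm_sq, hz_norm, hz_re, mul_div_cancel₀ w two_ne_zero, one_pow,
      Complex.ofReal_one] at h
  exact ⟨z, palindromic_quartic_eq_zero hz (mod_cast hw), hz_re⟩

theorem one_sub_lt_sqrt_of_sq_lt {ε b : ℝ} (hb : b ^ 2 < ε) :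
    1 - ε < √((1 + ε) ^ 2 - 4 * b ^ 2) :=
  Real.lt_sqrt_of_sq_lt (by linarith)

theorem sqrt_le_five_sub {ε b : ℝ} (hε : ε ≤ 5) (hεb : 3 * (ε - 2) ≤ b ^ 2) :
    √((1 + ε) ^ 2 - 4 * b ^ 2) ≤ 5 - ε :=
  Real.sqrt_le_iff.mpr ⟨by linarith, by linarith⟩

/- Given `b ^ 2 < ε`, the bound `3 * (ε - 2) ≤ b ^ 2` says that the larger root of
`w ^ 2 + (1 - ε) * w + (b ^ 2 - ε)` is at most `2`. -/
theorem exists_root_pos_re_of_b_lt_sqrt_eps_general {ε b : ℝ}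
    (hb : b ^ 2 < ε) (hεb : 3 * (ε - 2) ≤ b ^ 2) :
    ∃ z : ℂ, z ^ 4 + (1 - ε) * z ^ 3 + (2 + b ^ 2 - ε) * z ^ 2 + (1 - ε) * z + 1 = 0 ∧
      z.re = (ε - 1 + √((1 + ε) ^ 2 - 4 * b ^ 2)) / 4 ∧ 0 < z.re := by
  have hs_gt := one_sub_lt_sqrt_of_sq_lt hb
  have hs_le := sqrt_le_five_sub (by linarith) hεb
  have hD : 0 ≤ (1 + ε) ^ 2 - 4 * b ^ 2 := by linarith [sq_nonneg (1 - ε)]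
  have hs_sq := Real.sq_sqrt hD
  set s := √((1 + ε) ^ 2 - 4 * b ^ 2)
  have hw_abs : |(ε - 1 + s) / 2| ≤ 2 := abs_le.mpr ⟨by linarith, by linarith⟩
  have hw : ((ε - 1 + s) / 2) ^ 2 + (1 - ε) * ((ε - 1 + s) / 2) + (2 + b ^ 2 - ε - 2) = 0 := by
    linear_combination hs_sq / 4
  obtain ⟨z, hz, hz_re⟩ := exists_palindromic_quartic_root_re_eq_half hw_abs hw
  push_cast at hz
  exact ⟨z, hz, by linarith, by linarith⟩

/-- For 0 ≤ ε < 1 and 0 < b < √ε, the characteristic polynomial has a root with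
positive real part, namely one with real part (ε − 1 + √((1+ε)² − 4b²))/4 > 0. -/
theorem exists_root_pos_re_of_b_lt_sqrt_eps (ε b : ℝ)
    (hε0 : 0 ≤ ε) (hε1 : ε < 1) (hb0 : 0 < b) (hb : b < Real.sqrt ε) :
    ∃ z : ℂ, z ^ 4 + (1 - ε) * z ^ 3 + (2 + b ^ 2 - ε) * z ^ 2 + (1 - ε) * z + 1 = 0 ∧
      z.re = (ε - 1 + Real.sqrt ((1 + ε) ^ 2 - 4 * b ^ 2)) / 4 ∧ 0 < z.re :=
  exists_root_pos_re_of_b_lt_sqrt_eps_general ((Real.lt_sqrt hb0.le).mp hb)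
    (by linarith [sq_nonneg b])
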